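/- Let X be a set, B ⊂ X a finite subset, and 𝓕 a finite family of mutually commuting mappings from X to itself. Then there exist a constant N and a polynomial p such that for all integers n ≥ N, the cardinality of the iterated image |𝓕^{(n)}(B)| equals p(n). -/

import Mathlib

/-! A finite commuting family turns `X` into a set acted on by `ℕ^k`, and the `n`-th iterated image
is the image of `B` under the vectors of degree `n`. Add the points of `B` one at a time. A point
newly reached from `x` in degree `n` is represented by the lexicographically least vector of degree
`n` carrying `x` to it; the vectors that do not arise in this way form an upper set of `ℕ^k`.
By Dickson's lemma an upper set is a finite union of translated orthants, so by inclusion-exclusion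
its number of elements of degree `n` is eventually a combination of binomial coefficients. -/

open Filter Polynomial Set
open scoped Pointwise

/-- Functions `ℕ → R` that agree with a polynomial over `R` at all large arguments. They form an
additive subgroup, which makes the closure properties used in counting arguments available. -/
def eventuallyPolynomial (R : Type*) [Ring R] : AddSubgroup (ℕ → R) where
  carrier := {f | ∃ p : R[X], ∀ᶠ n : ℕ in atTop, f n = p.eval (n : R)}
  zero_mem' := ⟨0, by simp⟩
  add_mem' := by
    rintro f g ⟨p, hp⟩ ⟨q, hq⟩
    refine ⟨p + q, ?_⟩
    filter_upwards [hp, hq] with n hpn hqn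
    rw [Pi.add_apply, hpn, hqn, eval_add]
  neg_mem' := by
    rintro f ⟨p, hp⟩
    refine ⟨-p, ?_⟩
    filter_upwards [hp] with n hpn
    rw [Pi.neg_apply, hpn, eval_neg]

theorem multichoose_sub_mem_eventuallyPolynomial (K : Type*) [Field K] [CharZero K] (k m : ℕ) :
    (fun n ↦ (k.multichoose (n - m) : K)) ∈ eventuallyPolynomial K := by
  rcases k with _ | d
  · refine ⟨0, ?_⟩
    filter_upwards [eventually_gt_atTop m] with n hn
    obtain ⟨j, hj⟩ := Nat.exists_eq_succ_of_ne_zero (Nat.sub_ne_zero_of_lt hn)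
    simp [hj]
  · refine ⟨preHilbertPoly K d m, ?_⟩
    filter_upwards [eventually_ge_atTop m] with n hn
    rw [preHilbertPoly_eq_choose_sub_add K d hn, Nat.multichoose_eq,
      show d + 1 + (n - m) - 1 = n - m + d by omega, Nat.choose_symm_add]

theorem exists_finite_upperClosure_eq_of_isUpperSet {α : Type*} [PartialOrder α]
    [WellQuasiOrderedLE α] {U : Set α} (hU : IsUpperSet U) :
    ∃ S : Set α, S.Finite ∧ (upperClosure S : Set α) = U := by
  refine ⟨{a | Minimal (· ∈ U) a},
    WellQuasiOrderedLE.finite_of_isAntichain (setOfPred_minimal_antichain _), ?_⟩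
  refine Subset.antisymm (upperClosure_min (fun a ha ↦ ha.prop) hU) fun a ha ↦ ?_
  obtain ⟨b, hba, hb⟩ := exists_minimal_le_of_wellFoundedLT (· ∈ U) a ha
  exact ⟨b, hb, hba⟩

section HilbertFunction

variable {ι : Type*}

/-- The number of exponent vectors of degree `n` in `U`. When `U` is an upper set this is the
Hilbert function of the monomial ideal spanned by the monomials with exponents in `U`. -/
noncomputable def hilbertFunction (U : Set (ι →₀ ℕ)) (n : ℕ) : ℕ :=
  (U ∩ {a | a.degree = n}).ncard

theorem hilbertFunction_union_add_inter [Finite ι] (U V : Set (ι →₀ ℕ)) (n : ℕ) :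
    hilbertFunction (U ∪ V) n + hilbertFunction (U ∩ V) n =
      hilbertFunction U n + hilbertFunction V n := by
  have hfin (W : Set (ι →₀ ℕ)) : (W ∩ {a | a.degree = n}).Finite :=
    (Finsupp.finite_of_degree_eq n).inter_of_right W
  rw [hilbertFunction, hilbertFunction, union_inter_distrib_right, inter_inter_distrib_right]
  exact ncard_union_add_ncard_inter _ _ (hfin U) (hfin V)

theorem hilbertFunction_compl [Finite ι] (U : Set (ι →₀ ℕ)) (n : ℕ) :
    hilbertFunction U n + hilbertFunction Uᶜ n = hilbertFunction (univ : Set (ι →₀ ℕ)) n := by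
  rw [← hilbertFunction_union_add_inter, union_compl_self, inter_compl_self]
  simp [hilbertFunction]

theorem ncard_setOf_degree_eq [Fintype ι] (n : ℕ) :
    {a : ι →₀ ℕ | a.degree = n}.ncard = (Fintype.card ι).multichoose n := by
  classical
  rw [← Finset.card_univ, ← Finset.card_finsuppAntidiag_nat_eq_multichoose, ← ncard_coe_finset]
  congr 1
  ext a
  simp [Finsupp.degree_eq_sum]

theorem hilbertFunction_Ici [Fintype ι] {g : ι →₀ ℕ} {n : ℕ} (hn : g.degree ≤ n) :
    hilbertFunction (Ici g) n = (Fintype.card ι).multichoose (n - g.degree) := by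
  have htranslate : Ici g ∩ {a | a.degree = n} = (g + ·) '' {a | a.degree = n - g.degree} := by
    ext a
    constructor
    · rintro ⟨hga, ha⟩
      obtain ⟨c, rfl⟩ := exists_add_of_le (mem_Ici.1 hga)
      have hdeg : g.degree + c.degree = n := by simpa using ha
      exact ⟨c, Nat.eq_sub_of_add_eq' hdeg, rfl⟩
    · rintro ⟨c, hc, rfl⟩
      have hdeg : c.degree = n - g.degree := hc
      exact ⟨mem_Ici.2 le_self_add, by rw [mem_ofPred_eq, map_add, hdeg, Nat.add_sub_cancel' hn]⟩
  rw [hilbertFunction, htranslate, ncard_image_of_injective _ (add_right_injective g),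
    ncard_setOf_degree_eq]

variable [Finite ι] (K : Type*) [Field K] [CharZero K]

theorem hilbertFunction_Ici_mem_eventuallyPolynomial (g : ι →₀ ℕ) :
    (fun n ↦ (hilbertFunction (Ici g) n : K)) ∈ eventuallyPolynomial K := by
  have := Fintype.ofFinite ι
  obtain ⟨p, hp⟩ := multichoose_sub_mem_eventuallyPolynomial K (Fintype.card ι) g.degree
  refine ⟨p, ?_⟩
  filter_upwards [hp, eventually_ge_atTop g.degree] with n hpn hn
  rw [hilbertFunction_Ici hn, hpn]

/-- Intersecting with a principal upper set makes the induction on generators go through, since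
`Ici s ∩ Ici g` is again principal. -/
theorem hilbertFunction_upperClosure_inter_Ici_mem_eventuallyPolynomial
    {S : Set (ι →₀ ℕ)} (hS : S.Finite) (g : ι →₀ ℕ) :
    (fun n ↦ (hilbertFunction (↑(upperClosure S) ∩ Ici g) n : K)) ∈ eventuallyPolynomial K := by
  induction S, hS using Set.Finite.induction_on generalizing g with
  | empty =>
    convert (eventuallyPolynomial K).zero_mem using 2
    simp [hilbertFunction]
  | @insert s S _ _ ih =>
    have hunion : (↑(upperClosure (insert s S)) ∩ Ici g : Set (ι →₀ ℕ)) =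
        Ici (s ⊔ g) ∪ (↑(upperClosure S) ∩ Ici g) := by
      rw [insert_eq, upperClosure_union, UpperSet.coe_inf, upperClosure_singleton, UpperSet.coe_Ici,
        union_inter_distrib_right, Ici_inter_Ici]
    have hinter : Ici (s ⊔ g) ∩ (↑(upperClosure S) ∩ Ici g) =
        (↑(upperClosure S) ∩ Ici (s ⊔ g) : Set (ι →₀ ℕ)) := by
      rw [← Ici_inter_Ici]
      tauto_set
    rw [hunion]
    convert sub_mem (add_mem (hilbertFunction_Ici_mem_eventuallyPolynomial K (s ⊔ g)) (ih g))
      (ih (s ⊔ g)) using 2 with n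
    have hcount :=
      hilbertFunction_union_add_inter (Ici (s ⊔ g)) (↑(upperClosure S) ∩ Ici g) n
    rw [hinter] at hcount
    rw [Pi.sub_apply, Pi.add_apply, eq_sub_iff_add_eq]
    exact_mod_cast hcount

theorem hilbertFunction_mem_eventuallyPolynomial_of_isUpperSet {U : Set (ι →₀ ℕ)}
    (hU : IsUpperSet U) : (fun n ↦ (hilbertFunction U n : K)) ∈ eventuallyPolynomial K := by
  obtain ⟨S, hS, rfl⟩ := exists_finite_upperClosure_eq_of_isUpperSet hU
  simpa using! hilbertFunction_upperClosure_inter_Ici_mem_eventuallyPolynomial K hS 0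

end HilbertFunction

section Representatives

variable {ι X : Type*} [LinearOrder ι] [AddAction (ι →₀ ℕ) X]

/-- The exponent vectors `a` that are superfluous when listing the points `a +ᵥ x` of each degree
`n` outside `Y n`: either `a +ᵥ x` lies in `Y`, or a lexicographically smaller vector of the same
degree gives the same point. -/
def redundantExponents (Y : ℕ → Set X) (x : X) : Set (ι →₀ ℕ) :=
  {a | a +ᵥ x ∈ Y a.degree ∨
    ∃ b, b.degree = a.degree ∧ b +ᵥ x = a +ᵥ x ∧ toLex b < toLex a}

theorem isUpperSet_redundantExponents {Y : ℕ → Set X}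
    (hY : ∀ (c : ι →₀ ℕ) n, c +ᵥ Y n ⊆ Y (c.degree + n)) (x : X) :
    IsUpperSet (redundantExponents (ι := ι) Y x) := by
  intro a a' hle ha
  obtain ⟨c, rfl⟩ := exists_add_of_le hle
  rw [add_comm a c]
  rcases ha with ha | ⟨b, hdeg, hpt, hlt⟩
  · left
    rw [add_vadd, map_add]
    exact hY c _ (vadd_mem_vadd_set ha)
  · right
    refine ⟨c + b, by rw [map_add, map_add, hdeg], by rw [add_vadd, add_vadd, hpt], ?_⟩
    exact add_lt_add_right hlt (toLex c)

theorem bijOn_vadd_compl_redundantExponents [Finite ι] (Y : ℕ → Set X) (x : X) (n : ℕ) :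
    BijOn (· +ᵥ x) ((redundantExponents (ι := ι) Y x)ᶜ ∩ {a | a.degree = n})
      (({a : ι →₀ ℕ | a.degree = n} +ᵥ {x}) \ Y n) := by
  refine ⟨?_, ?_, ?_⟩
  · rintro a ⟨ha, rfl⟩
    exact ⟨vadd_mem_vadd rfl rfl, fun hmem ↦ ha (Or.inl hmem)⟩
  · rintro a ⟨ha, rfl⟩ b ⟨hb, hdeg⟩ hpt
    rcases lt_trichotomy (toLex a) (toLex b) with hlt | heq | hlt
    · exact absurd (Or.inr ⟨a, hdeg.symm, hpt, hlt⟩) hb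
    · exact toLex.injective heq
    · exact absurd (Or.inr ⟨b, hdeg, hpt.symm, hlt⟩) ha
  · rintro _ ⟨⟨a, rfl, x, rfl, rfl⟩, hnot⟩
    have hfin : {b : ι →₀ ℕ | b.degree = a.degree ∧ b +ᵥ x = a +ᵥ x}.Finite :=
      (Finsupp.finite_of_degree_eq a.degree).subset fun b hb ↦ hb.1
    obtain ⟨b, ⟨hdeg, hpt⟩, hmin⟩ := Set.exists_min_image _ toLex hfin ⟨a, rfl, rfl⟩
    refine ⟨b, ⟨?_, hdeg⟩, hpt⟩
    rintro (hmem | ⟨c, hcdeg, hcpt, hlt⟩)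
    · exact hnot (by rwa [hdeg, hpt] at hmem)
    · exact (hmin c ⟨hcdeg.trans hdeg, hcpt.trans hpt⟩).not_gt hlt

variable [Finite ι] (K : Type*) [Field K] [CharZero K]

theorem ncard_vadd_singleton_sdiff_mem_eventuallyPolynomial {Y : ℕ → Set X}
    (hY : ∀ (c : ι →₀ ℕ) n, c +ᵥ Y n ⊆ Y (c.degree + n)) (x : X) :
    (fun n ↦ ((({a : ι →₀ ℕ | a.degree = n} +ᵥ {x}) \ Y n).ncard : K)) ∈
      eventuallyPolynomial K := by
  convert sub_mem (hilbertFunction_mem_eventuallyPolynomial_of_isUpperSet K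
    (isUpperSet_univ (α := ι →₀ ℕ)))
    (hilbertFunction_mem_eventuallyPolynomial_of_isUpperSet K
      (isUpperSet_redundantExponents hY x)) using 2 with n
  rw [← (bijOn_vadd_compl_redundantExponents Y x n).ncard_eq, Pi.sub_apply,
    ← hilbertFunction_compl (redundantExponents (ι := ι) Y x), Nat.cast_add, add_sub_cancel_left,
    hilbertFunction]

theorem ncard_setOf_degree_eq_vadd_mem_eventuallyPolynomial {B : Set X} (hB : B.Finite) :
    (fun n ↦ (({a : ι →₀ ℕ | a.degree = n} +ᵥ B).ncard : K)) ∈ eventuallyPolynomial K := by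
  induction B, hB using Set.Finite.induction_on with
  | empty =>
    convert (eventuallyPolynomial K).zero_mem using 2
    simp
  | @insert x B _ hB ih =>
    have hstable (c : ι →₀ ℕ) (n : ℕ) :
        c +ᵥ ({a : ι →₀ ℕ | a.degree = n} +ᵥ B) ⊆
          {a : ι →₀ ℕ | a.degree = c.degree + n} +ᵥ B := by
      rintro _ ⟨_, ⟨a, rfl, b, hb, rfl⟩, rfl⟩
      exact ⟨c + a, map_add _ _ _, b, hb, add_vadd c a b⟩
    convert add_mem (ncard_vadd_singleton_sdiff_mem_eventuallyPolynomial K hstable x) ih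
      using 2 with n
    have hfin (C : Set X) (hC : C.Finite) : ({a : ι →₀ ℕ | a.degree = n} +ᵥ C).Finite :=
      (Finsupp.finite_of_degree_eq n).vadd hC
    rw [Pi.add_apply, ← Nat.cast_add, ncard_sdiff_add_ncard _ _ (hfin _ (finite_singleton x))
      (hfin B hB), insert_eq, vadd_union]

end Representatives

section Commuting

variable {M : Type*} [Monoid M]

open scoped IsMulCommutative in
theorem exists_addMonoidHom_single_one_eq {ι : Type*} (g : ι → M)
    (hg : ∀ i j, g i * g j = g j * g i) :
    ∃ φ : (ι →₀ ℕ) →+ Additive M, ∀ i, φ (Finsupp.single i 1) = Additive.ofMul (g i) := by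
  have hcomm : IsMulCommutative (Submonoid.closure (range g)) :=
    Submonoid.isMulCommutative_closure M (by rintro _ ⟨i, rfl⟩ _ ⟨j, rfl⟩; exact hg i j)
  let ψ : (ι →₀ ℕ) →+ Additive (Submonoid.closure (range g)) :=
    Finsupp.liftAddHom fun i ↦ multiplesHom _
      (Additive.ofMul ⟨g i, Submonoid.subset_closure (mem_range_self i)⟩)
  refine ⟨(Submonoid.closure (range g)).subtype.toAdditive.comp ψ, fun i ↦ ?_⟩
  simp [ψ]

theorem setOf_degree_eq_vadd_eq_range_pow_smul {ι X : Type*} [MulAction M X]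
    [AddAction (ι →₀ ℕ) X] {g : ι → M}
    (hg : ∀ i (x : X), Finsupp.single i 1 +ᵥ x = g i • x) (B : Set X) (n : ℕ) :
    {a : ι →₀ ℕ | a.degree = n} +ᵥ B = range g ^ n • B := by
  have hstep (C : Set X) : range (fun i : ι ↦ Finsupp.single i 1) +ᵥ C = range g • C := by
    ext x
    simp only [Set.mem_vadd, Set.mem_smul, exists_range_iff, hg]
  have hdeg (n : ℕ) :
      {a : ι →₀ ℕ | a.degree = n} = n • range (fun i : ι ↦ Finsupp.single i 1) := by
    simpa using (Finsupp.nsmul_single_one_image (n := n) (s := (univ : Set ι))).symm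
  rw [hdeg]
  induction n with
  | zero => rw [zero_nsmul, zero_vadd, pow_zero, one_smul]
  | succ n ih => rw [succ_nsmul', add_vadd, ih, hstep, pow_succ', mul_smul]

theorem card_iterated_image_eventually_polynomial_general (K : Type*) [Field K] [CharZero K]
    {X : Type*} [MulAction M X] {A : Set M} (hA : A.Finite)
    (hcomm : ∀ a ∈ A, ∀ b ∈ A, a * b = b * a) {B : Set X} (hB : B.Finite) :
    ∃ (N : ℕ) (p : K[X]), ∀ n : ℕ, N ≤ n → ((A ^ n • B).ncard : K) = p.eval (n : K) := by
  obtain ⟨k, g, -, rfl⟩ := hA.fin_param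
  obtain ⟨φ, hφ⟩ := exists_addMonoidHom_single_one_eq g fun i j ↦
    hcomm _ (mem_range_self i) _ (mem_range_self j)
  let _ : AddAction (Fin k →₀ ℕ) X := AddAction.compHom X φ
  have hpow := setOf_degree_eq_vadd_eq_range_pow_smul (g := g)
    (fun i (x : X) ↦ congrArg (· +ᵥ x) (hφ i)) B
  obtain ⟨p, hp⟩ := ncard_setOf_degree_eq_vadd_mem_eventuallyPolynomial (ι := Fin k) K hB
  obtain ⟨N, hN⟩ := eventually_atTop.1 hp
  exact ⟨N, p, fun n hn ↦ by rw [← hpow, ← hN n hn]⟩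

theorem setOf_foldr_eq_pow_smul {X : Type*} (F : Set (Function.End X)) (B : Set X) (n : ℕ) :
    {x : X | ∃ L : List (X → X), L.length = n ∧ (∀ f ∈ L, f ∈ F) ∧
      ∃ b ∈ B, x = L.foldr (fun f y ↦ f y) b} = F ^ n • B := by
  induction n with
  | zero => simp [List.length_eq_zero_iff]
  | succ n ih =>
    rw [pow_succ', mul_smul, ← ih]
    ext x
    constructor
    · rintro ⟨_ | ⟨f, L⟩, hlen, hL, b, hb, rfl⟩
      · simp at hlen
      · rw [List.forall_mem_cons] at hL
        exact ⟨f, hL.1, _, ⟨L, Nat.succ_injective hlen, hL.2, b, hb, rfl⟩, rfl⟩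
    · rintro ⟨f, hf, _, ⟨L, rfl, hL, b, hb, rfl⟩, rfl⟩
      exact ⟨f :: L, rfl, List.forall_mem_cons.2 ⟨hf, hL⟩, b, hb, rfl⟩

end Commuting

/-- Khovanskiĭ. Let `B ⊂ X` be a finite subset and `𝓕` a finite
family of mutually commuting mappings from `X` to itself. Then there exist a constant
`N` and a polynomial `p` such that for all `n ≥ N`, the cardinality of the `n`-th
iterated image `𝓕^{(n)}(B) = ∪ (f₁∘⋯∘f_n)(B)` (union over all length-`n` lists of
members of `𝓕`, here encoded by lists and `foldr`) equals `p(n)`. -/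
theorem card_iterated_image_eventually_polynomial
    {X : Type*} (B : Set X) (hB : B.Finite)
    (F : Set (X → X)) (hF : F.Finite)
    (hcomm : ∀ f ∈ F, ∀ g ∈ F, f ∘ g = g ∘ f) :
    ∃ (N : ℕ) (p : Polynomial ℝ), ∀ n : ℕ, N ≤ n →
      ((Set.ncard {x : X | ∃ L : List (X → X), L.length = n ∧ (∀ f ∈ L, f ∈ F) ∧
          ∃ b ∈ B, x = L.foldr (fun f y => f y) b}) : ℝ) = p.eval (n : ℝ) := by
  obtain ⟨N, p, hp⟩ :=
    card_iterated_image_eventually_polynomial_general ℝ (M := Function.End X) hF hcomm hB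
  exact ⟨N, p, fun n hn ↦ by rw [← hp n hn, ← setOf_foldr_eq_pow_smul F B n]; rfl⟩
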